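/- arXiv:1801.06865 — 4 statements merged into one kernel-verified Lean document; each statement's English description precedes it below -/
import Mathlib

section
/- Let n ≥ 1, α ∈ (0,1], q ∈ [1,∞), θ ∈ (0,1), and let β ∈ (0,1] satisfy β = θα − n(1−θ)/q (that is, −β/n = θ·(−α/n) + (1−θ)/q). Then there exists a constant C > 0, independent of u, such that for every continuous function u : ℝ^n → ℝ and every H ≥ 0 with |u(x) − u(y)| ≤ H·|x−y|^α for all x, y ∈ ℝ^n, one has [u]_β ≤ C · H^θ · ‖u‖_{q,∞}^{1-θ}, where [u]_β := sup_{x ≠ y} |u(x) − u(y)|/|x − y|^β. -/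
/-!
If `M = |u x - u y| > 0`, then `|u| ≥ M / 2` at one of the two points, say at `z`. The Hölder bound
keeps `|u| > M / 4` on the ball of radius `r` about `z`, where `H * r ^ α = M / 4`, so testing the
weak norm at the level `t = M / 4` gives `‖u‖_{q,∞} ≥ H r^α (r^n |B₁|)^{1/q}`
(`ofReal_le_weakLpNorm`). The Hölder bound also forces `r ≤ |x - y|`, hence
`M / |x - y|^β ≤ 4 H r^(α - β)`. The balance condition says
`α - β = (1 - θ) (α + n / q)`, so the two bounds combine (`rpow_balance`) with
`C = 4 |B₁|^(-(1 - θ) / q)`.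
-/

open MeasureTheory ENNReal

/-- The weak `L^q` (Lorentz `L^{q,∞}`) norm for finite exponent `q`:
`‖u‖_{q,∞} = sup_{t>0} t · |{x : |u(x)| > t}|^{1/q}`. -/
noncomputable def weakLpNorm {n : ℕ} (u : EuclideanSpace ℝ (Fin n) → ℝ)
    (q : ℝ) : ℝ≥0∞ :=
  ⨆ (t : ℝ) (_ : 0 < t),
    ENNReal.ofReal t * (volume {x | t < |u x|}) ^ (1 / q)

/-- A Hölder function with `|u z| ≥ 2 H r^α` exceeds `H r^α` in absolute value on the whole ball
`B(z, r)`; this bounds the weak norm from below. -/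
lemma ofReal_le_weakLpNorm {n : ℕ} {α q H r : ℝ} (hα : 0 < α) (hq : 0 < q) (hH : 0 < H)
    (hr : 0 < r) {u : EuclideanSpace ℝ (Fin n) → ℝ}
    (hu : ∀ x y, |u x - u y| ≤ H * dist x y ^ α) {z : EuclideanSpace ℝ (Fin n)}
    (hz : 2 * (H * r ^ α) ≤ |u z|) :
    ENNReal.ofReal (H * r ^ α * (r ^ n *
      volume.real (Metric.ball (0 : EuclideanSpace ℝ (Fin n)) 1)) ^ (1 / q)) ≤
      weakLpNorm u q := by
  have ht : 0 < H * r ^ α := by positivity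
  have hsub : Metric.ball z r ⊆ {x | H * r ^ α < |u x|} := by
    intro w hw
    have h1 : dist z w ^ α < r ^ α :=
      Real.rpow_lt_rpow dist_nonneg (by rwa [dist_comm]) hα
    have h2 : H * dist z w ^ α < H * r ^ α := mul_lt_mul_of_pos_left h1 hH
    have h3 := abs_sub_abs_le_abs_sub (u z) (u w)
    have h4 := hu z w
    simp only [Set.mem_ofPred_eq]
    linarith
  have hvol : ENNReal.ofReal (r ^ n *
      volume.real (Metric.ball (0 : EuclideanSpace ℝ (Fin n)) 1)) = volume (Metric.ball z r) := by
    rw [Measure.addHaar_ball_of_pos _ _ hr, finrank_euclideanSpace_fin,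
      ENNReal.ofReal_mul (by positivity), ofReal_measureReal measure_ball_lt_top.ne]
  refine le_trans ?_ (le_iSup₂ (f := fun (t : ℝ) (_ : 0 < t) =>
    ENNReal.ofReal t * (volume {x | t < |u x|}) ^ (1 / q)) (H * r ^ α) ht)
  rw [ENNReal.ofReal_mul ht.le,
    ← ENNReal.ofReal_rpow_of_nonneg (by positivity) (by positivity), hvol]
  gcongr

/-- The scaling identity behind the balance condition: the powers of `H` and of `r` agree. -/
lemma rpow_balance {n : ℕ} {α β q θ H r c : ℝ} (hH : 0 < H) (hr : 0 < r) (hc : 0 < c)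
    (hbal : β = θ * α - n * (1 - θ) / q) :
    4 * c ^ (-((1 - θ) / q)) * H ^ θ * (H * r ^ α * (r ^ n * c) ^ (1 / q)) ^ (1 - θ) =
      4 * H * r ^ (α - β) := by
  have hexp : α - β = α * (1 - θ) + n * (1 / q) * (1 - θ) := by rw [hbal]; ring
  have hHpow : H ^ θ * H ^ (1 - θ) = H := by
    rw [← Real.rpow_add hH]; simp
  have hcpow : c ^ (-((1 - θ) / q)) * c ^ (1 / q * (1 - θ)) = 1 := by
    rw [← Real.rpow_add hc, show -((1 - θ) / q) + 1 / q * (1 - θ) = 0 by ring, Real.rpow_zero]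
  rw [Real.mul_rpow (by positivity) (by positivity), Real.mul_rpow (by positivity) (by positivity),
    Real.mul_rpow (by positivity) (by positivity), Real.mul_rpow (by positivity) (by positivity),
    ← Real.rpow_natCast r n, ← Real.rpow_mul hr.le, ← Real.rpow_mul hr.le, ← Real.rpow_mul hr.le,
    ← Real.rpow_mul hc.le, hexp, Real.rpow_add hr]
  linear_combination (4 * r ^ (α * (1 - θ)) * r ^ (n * (1 / q) * (1 - θ))) *
    (H ^ θ * H ^ (1 - θ) * hcpow + hHpow)

/-- Interpolation of a Hölder seminorm between a stronger Hölder seminorm and the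
weak Lebesgue norm: if `β = θα - n(1-θ)/q` then `[u]_β ≤ C · H^θ · ‖u‖_{q,∞}^{1-θ}`
for every continuous `u` which is `α`-Hölder with constant `H`. The conclusion
`[u]_β ≤ RHS` is stated pointwise over all pairs `x ≠ y`. -/
theorem holder_weak_interpolation_holder
    (n : ℕ) (hn : 1 ≤ n) (α : ℝ) (hα : α ∈ Set.Ioc (0 : ℝ) 1)
    (q : ℝ) (hq : 1 ≤ q) (θ : ℝ) (hθ : θ ∈ Set.Ioo (0 : ℝ) 1)
    (β : ℝ) (hβ : β ∈ Set.Ioc (0 : ℝ) 1)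
    (hbal : β = θ * α - n * (1 - θ) / q) :
    ∃ C : ℝ, 0 < C ∧ ∀ u : EuclideanSpace ℝ (Fin n) → ℝ, Continuous u →
      ∀ H : ℝ, 0 ≤ H → (∀ x y, |u x - u y| ≤ H * dist x y ^ α) →
      ∀ x y : EuclideanSpace ℝ (Fin n), x ≠ y →
        ENNReal.ofReal (|u x - u y| / dist x y ^ β) ≤
          ENNReal.ofReal C * ENNReal.ofReal H ^ θ * (weakLpNorm u q) ^ (1 - θ) := by
  obtain ⟨hα0, -⟩ := hα
  obtain ⟨hθ0, hθ1⟩ := hθ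
  obtain ⟨hβ0, -⟩ := hβ
  have hq0 : 0 < q := by linarith
  set c : ℝ := volume.real (Metric.ball (0 : EuclideanSpace ℝ (Fin n)) 1) with hc_def
  have hc : 0 < c :=
    ENNReal.toReal_pos (Metric.measure_ball_pos _ _ one_pos).ne' measure_ball_lt_top.ne
  refine ⟨4 * c ^ (-((1 - θ) / q)), by positivity, ?_⟩
  intro u _ H hH0 hu x y hxy
  have hd : 0 < dist x y := dist_pos.2 hxy
  rcases (abs_nonneg (u x - u y)).eq_or_lt with hM | hM
  · simp [← hM]
  have hxy' := hu x y
  have hH : 0 < H := by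
    refine hH0.lt_of_ne' fun h => ?_
    rw [h, zero_mul] at hxy'
    linarith
  -- The radius at which the Hölder bound allows an oscillation of `|u x - u y| / 4`.
  obtain ⟨r, hr, hrM⟩ : ∃ r : ℝ, 0 < r ∧ H * r ^ α = |u x - u y| / 4 := by
    refine ⟨(|u x - u y| / 4 / H) ^ (1 / α), by positivity, ?_⟩
    rw [← Real.rpow_mul (by positivity), one_div_mul_cancel hα0.ne', Real.rpow_one]
    field_simp
  have hrd : r ≤ dist x y := by
    by_contra! h
    have := mul_lt_mul_of_pos_left (Real.rpow_lt_rpow hd.le h hα0) hH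
    linarith
  obtain ⟨z, hz⟩ : ∃ z, 2 * (H * r ^ α) ≤ |u z| := by
    by_contra! h
    have := abs_sub (u x) (u y)
    linarith [h x, h y]
  have hW := ofReal_le_weakLpNorm hα0 hq0 hH hr hu hz
  rw [← hc_def] at hW
  have hreal : |u x - u y| / dist x y ^ β ≤ 4 * H * r ^ (α - β) := by
    rw [show |u x - u y| = 4 * H * r ^ α by linarith, Real.rpow_sub hr, ← mul_div_assoc]
    gcongr
  have h1θ : 0 ≤ 1 - θ := by linarith
  calc ENNReal.ofReal (|u x - u y| / dist x y ^ β)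
      ≤ ENNReal.ofReal (4 * H * r ^ (α - β)) := ENNReal.ofReal_le_ofReal hreal
    _ = ENNReal.ofReal (4 * c ^ (-((1 - θ) / q))) * ENNReal.ofReal H ^ θ *
          ENNReal.ofReal (H * r ^ α * (r ^ n * c) ^ (1 / q)) ^ (1 - θ) := by
        rw [← rpow_balance hH hr hc hbal, ENNReal.ofReal_mul (by positivity),
          ENNReal.ofReal_mul (by positivity), ENNReal.ofReal_rpow_of_nonneg hH0 hθ0.le,
          ENNReal.ofReal_rpow_of_nonneg (by positivity) h1θ]
    _ ≤ _ := by gcongr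
end

section
/- Let M ⊂ ℝ^n be a Lebesgue measurable set of finite measure and let B ⊂ ℝ^n be a ball with |B| = |M|. Then for every t > 0 one has |(M)_t| ≤ |(B)_t|, where for a set A ⊂ ℝ^n and t > 0, (A)_t := {x ∈ ℝ^n : dist(x, A^c) > t} denotes the inner parallel set of A at distance t. -/
/-!
The inequality is the Brunn–Minkowski inequality for the sum of a set and a ball. Write
`K = innerParallel M t`, an open set, and let `r` be the radius of a ball with the measure of `K`.
Since `K + closedBall 0 t ⊆ M`, Brunn–Minkowski gives `ρ ≥ r + t`, where `ρ` is the radius of the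
ball `B` with the measure of `M`; and `innerParallel B t` contains the concentric ball of radius
`ρ - t ≥ r`, whose measure is at least that of `K`.

Brunn–Minkowski is used in the multiplicative form `|A| ^ p * |B| ^ q ≤ |C|` whenever
`p • A + q • B ⊆ C` and `p + q = 1` (`brunn_minkowski_rpow`), applied to `r⁻¹ • K`, the unit ball
and `(r + t)⁻¹ • M` with weights `r / (r + t)` and `t / (r + t)`: the first two sets have the
measure of the unit ball. Here `C` is any measurable superset of the Minkowski combination, so no
measurability of Minkowski sums is needed.

The multiplicative form is the Prékopa–Leindler inequality for indicator functions, and that is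
proved by induction on the dimension through Tonelli's theorem (`prekopa_leindler_pi`). In
dimension one (`prekopa_leindler_real`) the functions are truncated and scaled so that `f` and `g`
have supremum `1`; the superlevel sets at every height below `1` are then nonempty, and the
layer-cake formula reduces the claim to `|A| + |B| ≤ |A + B|` on the line, followed by the
weighted AM-GM inequality.
-/

open MeasureTheory EMetric

/-- The inner parallel set `(A)_t = {x : dist(x, Aᶜ) > t}`, using the extended
distance so that `dist(x, ∅) = ∞`. -/
def innerParallel {n : ℕ} (A : Set (EuclideanSpace ℝ (Fin n))) (t : ℝ) :
    Set (EuclideanSpace ℝ (Fin n)) :=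
  {x | ENNReal.ofReal t < infEdist x Aᶜ}

open scoped ENNReal

/-! ### Brunn–Minkowski on the line -/

/-- One-dimensional Brunn–Minkowski for compact sets: the translates `K + min L` and `max K + L` both
lie in `K + L` and meet only in the point `max K + min L`. -/
theorem measure_add_le_of_isCompact {K L C : Set ℝ} (hK : IsCompact K) (hL : IsCompact L)
    (hK0 : K.Nonempty) (hL0 : L.Nonempty) (h : ∀ a ∈ K, ∀ b ∈ L, a + b ∈ C) :
    volume K + volume L ≤ volume C := by
  have ha := hK.sSup_mem hK0
  have hb := hL.sInf_mem hL0
  set a := sSup K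
  set b := sInf L
  have hsub : (fun x => x + (-b)) ⁻¹' K ∪ (fun x => x + (-a)) ⁻¹' L ⊆ C := by
    rintro x (hx | hx)
    · simpa using h _ hx _ hb
    · simpa [add_comm] using h _ ha _ hx
  have hd : AEDisjoint volume ((fun x => x + (-b)) ⁻¹' K) ((fun x => x + (-a)) ⁻¹' L) := by
    refine measure_mono_null (t := {a + b}) ?_ (by simp)
    rintro x ⟨h1, h2⟩
    have h1' := le_csSup hK.bddAbove h1
    have h2' := csInf_le hL.bddBelow h2
    simp only [Set.mem_singleton_iff]
    simp only [← sub_eq_add_neg] at h1' h2'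
    apply le_antisymm
    · change x - b ≤ a at h1'
      linarith
    · change b ≤ x - a at h2'
      linarith
  calc volume K + volume L
      = volume ((fun x => x + (-b)) ⁻¹' K ∪ (fun x => x + (-a)) ⁻¹' L) := by
        rw [measure_union₀ _ hd, measure_preimage_add_right, measure_preimage_add_right]
        exact (hL.measurableSet.preimage (measurable_add_const _)).nullMeasurableSet
    _ ≤ volume C := measure_mono hsub

/-- One-dimensional Brunn–Minkowski for measurable sets, by inner regularity. -/
theorem measure_add_le {A B C : Set ℝ} (hA : MeasurableSet A) (hB : MeasurableSet B)
    (hA0 : A.Nonempty) (hB0 : B.Nonempty) (h : ∀ a ∈ A, ∀ b ∈ B, a + b ∈ C) :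
    volume A + volume B ≤ volume C := by
  obtain ⟨a, ha⟩ := hA0
  obtain ⟨b, hb⟩ := hB0
  rw [hA.measure_eq_iSup_isCompact, hB.measure_eq_iSup_isCompact]
  simp only [iSup_and']
  refine ENNReal.biSup_add_biSup_le' ⟨∅, by simp⟩ ⟨∅, by simp⟩ ?_
  rintro K ⟨hKA, hK⟩ L ⟨hLB, hL⟩
  -- A base point is adjoined so that both compact sets are nonempty.
  refine le_trans (add_le_add (measure_mono (Set.subset_insert a K))
    (measure_mono (Set.subset_insert b L))) ?_
  refine measure_add_le_of_isCompact (hK.insert a) (hL.insert b) (Set.insert_nonempty _ _)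
    (Set.insert_nonempty _ _) fun x hx y hy => h x ?_ y ?_
  · exact Set.insert_subset ha hKA hx
  · exact Set.insert_subset hb hLB hy

theorem measure_convex_comb_le {p q : ℝ} (hp : 0 < p) (hq : 0 < q) {A B C : Set ℝ}
    (hA : MeasurableSet A) (hB : MeasurableSet B)
    (hA0 : A.Nonempty) (hB0 : B.Nonempty) (h : ∀ a ∈ A, ∀ b ∈ B, p * a + q * b ∈ C) :
    ENNReal.ofReal p * volume A + ENNReal.ofReal q * volume B ≤ volume C := by
  have key : ∀ {r : ℝ} (_ : 0 < r) (S : Set ℝ),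
      volume ((fun x => r⁻¹ * x) ⁻¹' S) = ENNReal.ofReal r * volume S := by
    intro r hr S
    rw [Real.volume_preimage_mul_left (inv_ne_zero hr.ne'), inv_inv, abs_of_pos hr]
  rw [← key hp, ← key hq]
  refine measure_add_le (hA.preimage (measurable_const_mul _))
    (hB.preimage (measurable_const_mul _)) ?_ ?_ ?_
  · obtain ⟨a, ha⟩ := hA0
    exact ⟨p * a, by simpa [hp.ne'] using ha⟩
  · obtain ⟨a, ha⟩ := hB0
    exact ⟨q * a, by simpa [hq.ne'] using ha⟩
  · intro a ha b hb
    have := h _ ha _ hb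
    rwa [mul_inv_cancel_left₀ hp.ne', mul_inv_cancel_left₀ hq.ne'] at this

/-! ### The Prékopa–Leindler and Brunn–Minkowski inequalities -/

/-- An additive form of the Prékopa–Leindler inequality on the line for `f` and `g` with supremum `1`.
It is integrated over the heights `s` of superlevel sets; the normalization makes the superlevel
sets of `f` and `g` nonempty for all `s < 1` and empty for all `s ≥ 1`, so that they can be compared
by Brunn–Minkowski at every height. -/
theorem lintegral_add_le_of_min_le {p q : ℝ} (hp : 0 < p) (hq : 0 < q) {f g h : ℝ → ℝ}
    (hf : Measurable f) (hg : Measurable g) (hh : Measurable h)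
    (hf0 : ∀ x, 0 ≤ f x) (hg0 : ∀ x, 0 ≤ g x) (hh0 : ∀ x, 0 ≤ h x)
    (hf1 : ∀ x, f x ≤ 1) (hg1 : ∀ x, g x ≤ 1)
    (hfs : ∀ s < 1, ∃ x, s < f x) (hgs : ∀ s < 1, ∃ x, s < g x)
    (hfg : ∀ x y, min (f x) (g y) ≤ h (p * x + q * y)) :
    ENNReal.ofReal p * (∫⁻ x, ENNReal.ofReal (f x)) +
      ENNReal.ofReal q * (∫⁻ x, ENNReal.ofReal (g x)) ≤ ∫⁻ x, ENNReal.ofReal (h x) := by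
  rw [lintegral_eq_lintegral_meas_lt _ (.of_forall hf0) hf.aemeasurable,
    lintegral_eq_lintegral_meas_lt _ (.of_forall hg0) hg.aemeasurable,
    lintegral_eq_lintegral_meas_lt _ (.of_forall hh0) hh.aemeasurable]
  rw [← lintegral_const_mul' _ _ ENNReal.ofReal_ne_top,
    ← lintegral_const_mul' _ _ ENNReal.ofReal_ne_top, ← lintegral_add_left]
  · refine lintegral_mono fun s => ?_
    by_cases hs : s < 1
    · refine measure_convex_comb_le hp hq (measurableSet_lt measurable_const hf)
        (measurableSet_lt measurable_const hg) (hfs s hs) (hgs s hs) ?_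
      intro a ha b hb
      exact lt_of_lt_of_le (lt_min ha hb) (hfg a b)
    · have h1 : {a | s < f a} = ∅ := by
        ext x; simpa using (hf1 x).trans (not_lt.1 hs)
      have h2 : {a | s < g a} = ∅ := by
        ext x; simpa using (hg1 x).trans (not_lt.1 hs)
      simp [h1, h2]
  · refine Measurable.const_mul (Antitone.measurable ?_) _
    intro s t hst
    exact measure_mono fun x hx => lt_of_le_of_lt hst hx

/-- The weighted AM-GM inequality in `ℝ≥0∞`. -/
theorem rpow_mul_rpow_le_add {p q : ℝ} (hp : 0 < p) (hq : 0 < q) (hpq : p + q = 1) (a b : ℝ≥0∞) :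
    a ^ p * b ^ q ≤ ENNReal.ofReal p * a + ENNReal.ofReal q * b := by
  rcases eq_or_ne a ∞ with rfl | ha
  · simp [ENNReal.mul_top, hp]
  rcases eq_or_ne b ∞ with rfl | hb
  · simp [ENNReal.mul_top, hq]
  rw [← ENNReal.ofReal_toReal ha, ← ENNReal.ofReal_toReal hb,
    ENNReal.ofReal_rpow_of_nonneg (by simp) hp.le, ENNReal.ofReal_rpow_of_nonneg (by simp) hq.le,
    ← ENNReal.ofReal_mul (by positivity), ← ENNReal.ofReal_mul hp.le, ← ENNReal.ofReal_mul hq.le,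
    ← ENNReal.ofReal_add (by positivity) (by positivity)]
  exact ENNReal.ofReal_le_ofReal
    (Real.geom_mean_le_arith_mean2_weighted hp.le hq.le (by simp) (by simp) hpq)

theorem min_le_rpow_mul_rpow {p q : ℝ} (hp : 0 < p) (hq : 0 < q) (hpq : p + q = 1) (a b : ℝ≥0∞) :
    min a b ≤ a ^ p * b ^ q := by
  calc min a b = (min a b) ^ p * (min a b) ^ q := by
        rw [← ENNReal.rpow_add_of_nonneg _ _ hp.le hq.le, hpq, ENNReal.rpow_one]
    _ ≤ _ := by gcongr <;> simp

/-- A function truncated at a height `a` not exceeding its supremum, and divided by `a`, has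
supremum `1`. -/
theorem trunc_aux {f : ℝ → ℝ≥0∞} {a : ℝ≥0∞} (ha0 : a ≠ 0)
    (hat : a ≠ ∞) (ha : a ≤ ⨆ x, f x) : ∀ s < (1 : ℝ), ∃ x, s < (min (f x) a / a).toReal := by
  intro s hs
  rcases lt_or_ge s 0 with h0 | h0
  · exact ⟨0, h0.trans_le ENNReal.toReal_nonneg⟩
  have : ENNReal.ofReal s * a < a := by
    conv_rhs => rw [← one_mul a]
    exact (ENNReal.mul_lt_mul_iff_left ha0 hat).2 (by simpa using hs)
  obtain ⟨x, hx⟩ := lt_iSup_iff.1 (this.trans_le ha)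
  refine ⟨x, (ENNReal.ofReal_lt_iff_lt_toReal h0 ?_).1 ?_⟩
  · exact ENNReal.div_ne_top (ne_top_of_le_ne_top hat (min_le_right _ _)) ha0
  · rw [ENNReal.lt_div_iff_mul_lt (.inl ha0) (.inl hat)]
    exact lt_min hx this

/-- Prékopa–Leindler on the line for `f` and `g` truncated at finite heights `a` and `b` not exceeding
their suprema; `h` is correspondingly scaled by `a ^ p * b ^ q`. -/
theorem prekopa_trunc {p q : ℝ} (hp : 0 < p) (hq : 0 < q) (hpq : p + q = 1)
    {f g h : ℝ → ℝ≥0∞} (hf : Measurable f) (hg : Measurable g) (hh : Measurable h)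
    (hfg : ∀ x y, f x ^ p * g y ^ q ≤ h (p * x + q * y))
    {a b : ℝ≥0∞} (ha0 : a ≠ 0) (hat : a ≠ ∞) (ha : a ≤ ⨆ x, f x)
    (hb0 : b ≠ 0) (hbt : b ≠ ∞) (hb : b ≤ ⨆ x, g x) :
    (∫⁻ x, min (f x) a) ^ p * (∫⁻ x, min (g x) b) ^ q ≤ ∫⁻ x, h x := by
  set c := a ^ p * b ^ q with hc
  have hc0 : c ≠ 0 := by simp [hc, ha0, hat, hb0, hbt, ENNReal.rpow_eq_zero_iff]
  have hct : c ≠ ∞ := ENNReal.mul_ne_top (ENNReal.rpow_ne_top_of_nonneg hp.le hat)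
    (ENNReal.rpow_ne_top_of_nonneg hq.le hbt)
  have hdiv : ∀ {u d : ℝ≥0∞}, min u d / d ≤ 1 := fun {u d} =>
    ENNReal.div_le_of_le_mul (by simp)
  have hdivt : ∀ {u d : ℝ≥0∞}, min u d / d ≠ ∞ := fun {u d} =>
    ne_top_of_le_ne_top ENNReal.one_ne_top hdiv
  have hr1 : ∀ {u d : ℝ≥0∞}, (min u d / d).toReal ≤ 1 := fun {u d} =>
    ENNReal.toReal_le_of_le_ofReal zero_le_one (by simpa using hdiv)
  have main := lintegral_add_le_of_min_le hp hq
    (f := fun x => (min (f x) a / a).toReal) (g := fun x => (min (g x) b / b).toReal)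
    (h := fun x => (min (h x) c / c).toReal)
    (by fun_prop) (by fun_prop) (by fun_prop) (fun _ => ENNReal.toReal_nonneg)
    (fun _ => ENNReal.toReal_nonneg) (fun _ => ENNReal.toReal_nonneg)
    (fun x => hr1) (fun x => hr1) (trunc_aux ha0 hat ha) (trunc_aux hb0 hbt hb) (by
      intro x y
      rw [← ENNReal.toReal_min hdivt hdivt]
      refine ENNReal.toReal_mono hdivt ((min_le_rpow_mul_rpow hp hq hpq _ _).trans ?_)
      rw [ENNReal.div_rpow_of_nonneg _ _ hp.le, ENNReal.div_rpow_of_nonneg _ _ hq.le,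
        ENNReal.div_eq_inv_mul, ENNReal.div_eq_inv_mul, mul_mul_mul_comm,
        ← ENNReal.mul_inv (.inr (ENNReal.rpow_ne_top_of_nonneg hq.le hbt))
          (.inl (ENNReal.rpow_ne_top_of_nonneg hp.le hat)), ← hc, ← ENNReal.div_eq_inv_mul]
      gcongr
      refine le_min (le_trans ?_ (hfg x y)) ?_
      · gcongr <;> simp
      · rw [hc]; gcongr <;> simp)
  simp only [ENNReal.ofReal_toReal hdivt] at main
  have h3 : ∫⁻ x, min (h x) c / c ≤ (∫⁻ x, h x) / c := by
    simp only [div_eq_mul_inv]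
    rw [← lintegral_mul_const' _ _ (ENNReal.inv_ne_top.2 hc0)]
    gcongr; simp
  have h4 : ∀ (f : ℝ → ℝ≥0∞) {a : ℝ≥0∞}, a ≠ 0 →
      ∫⁻ x, min (f x) a / a = (∫⁻ x, min (f x) a) / a := by
    intro f a ha0
    simp only [div_eq_mul_inv]
    rw [lintegral_mul_const' _ _ (ENNReal.inv_ne_top.2 ha0)]
  rw [h4 f ha0, h4 g hb0] at main
  have h5 := ((rpow_mul_rpow_le_add hp hq hpq _ _).trans main).trans h3
  rw [ENNReal.div_rpow_of_nonneg _ _ hp.le, ENNReal.div_rpow_of_nonneg _ _ hq.le,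
        ENNReal.div_eq_inv_mul, ENNReal.div_eq_inv_mul, mul_mul_mul_comm,
        ← ENNReal.mul_inv (.inr (ENNReal.rpow_ne_top_of_nonneg hq.le hbt))
          (.inl (ENNReal.rpow_ne_top_of_nonneg hp.le hat)), ← hc, ← ENNReal.div_eq_inv_mul] at h5
  have h6 := mul_le_mul_left h5 c
  rwa [ENNReal.div_mul_cancel hc0 hct, ENNReal.div_mul_cancel hc0 hct] at h6

theorem tendsto_trunc {f : ℝ → ℝ≥0∞} (hf : Measurable f) :
    Filter.Tendsto (fun N : ℕ => ∫⁻ x, min (f x) (min (⨆ x, f x) (N + 1))) Filter.atTop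
      (nhds (∫⁻ x, f x)) := by
  refine lintegral_tendsto_of_tendsto_of_monotone (fun N => by fun_prop) (.of_forall ?_)
    (.of_forall ?_)
  · intro x N N' hN
    dsimp only
    gcongr
  · intro x
    have h1 : Filter.Tendsto (fun N : ℕ => ((N : ℝ≥0∞) + 1)) Filter.atTop (nhds ∞) := by
      simpa using ENNReal.tendsto_nat_nhds_top.add_const (1 : ℝ≥0∞)
    have h2 := (tendsto_const_nhds (x := f x)).min ((tendsto_const_nhds (x := ⨆ x, f x)).min h1)
    simpa [le_iSup f x] using h2

/-- The Prékopa–Leindler inequality on the line. -/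
theorem prekopa_leindler_real {p q : ℝ} (hp : 0 < p) (hq : 0 < q) (hpq : p + q = 1)
    {f g h : ℝ → ℝ≥0∞} (hf : Measurable f) (hg : Measurable g) (hh : Measurable h)
    (hfg : ∀ x y, f x ^ p * g y ^ q ≤ h (p * x + q * y)) :
    (∫⁻ x, f x) ^ p * (∫⁻ x, g x) ^ q ≤ ∫⁻ x, h x := by
  rcases eq_or_ne (∫⁻ x, f x) 0 with hf0 | hf0
  · simp [hf0, hp]
  rcases eq_or_ne (∫⁻ x, g x) 0 with hg0 | hg0
  · simp [hg0, hq]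
  have hsup : ∀ {u : ℝ → ℝ≥0∞}, ∫⁻ x, u x ≠ 0 → (⨆ x, u x) ≠ 0 := by
    intro u hu h0
    rw [ENNReal.iSup_eq_zero] at h0
    exact hu (by simp [h0])
  have t1 := (ENNReal.continuous_rpow_const (y := p)).tendsto _ |>.comp (tendsto_trunc hf)
  have t2 := (ENNReal.continuous_rpow_const (y := q)).tendsto _ |>.comp (tendsto_trunc hg)
  refine le_of_tendsto' (ENNReal.Tendsto.mul t1 (.inl ?_) t2 (.inl ?_)) fun N => ?_
  · simp [ENNReal.rpow_eq_zero_iff, hf0, hp.not_gt]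
  · simp [ENNReal.rpow_eq_zero_iff, hg0, hq.not_gt]
  · have hN : ((N : ℝ≥0∞) + 1) ≠ ∞ := by simp
    have hm : ∀ {u : ℝ≥0∞}, u ≠ 0 → min u ((N : ℝ≥0∞) + 1) ≠ 0 := by
      intro u hu
      rcases min_choice u ((N : ℝ≥0∞) + 1) with h | h <;> rw [h]
      · exact hu
      · simp
    exact prekopa_trunc hp hq hpq hf hg hh hfg (hm (hsup hf0))
      (ne_top_of_le_ne_top hN (min_le_right _ _)) (min_le_left _ _) (hm (hsup hg0))
      (ne_top_of_le_ne_top hN (min_le_right _ _)) (min_le_left _ _)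

/-- The Prékopa–Leindler inequality on `ℝⁿ`: the inequality in dimension `n` shows that the marginals
of `f`, `g`, `h` along the first coordinate satisfy the hypothesis in dimension one. -/
theorem prekopa_leindler_pi {p q : ℝ} (hp : 0 < p) (hq : 0 < q) (hpq : p + q = 1) (n : ℕ)
    {f g h : (Fin n → ℝ) → ℝ≥0∞} (hf : Measurable f) (hg : Measurable g) (hh : Measurable h)
    (hfg : ∀ x y, f x ^ p * g y ^ q ≤ h (p • x + q • y)) :
    (∫⁻ x, f x) ^ p * (∫⁻ x, g x) ^ q ≤ ∫⁻ x, h x := by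
  induction n with
  | zero =>
    have hu : ∀ u : (Fin 0 → ℝ) → ℝ≥0∞, ∫⁻ x, u x = u default := by
      intro u
      rw [lintegral_unique]
      simp only [volume_pi, Measure.pi_empty_univ, mul_one]
      exact congrArg u (Subsingleton.elim _ _)
    rw [hu, hu, hu]
    exact (hfg _ _).trans_eq (congrArg h (Subsingleton.elim _ _))
  | succ n ih =>
    have mp := (volume_preserving_piFinSuccAbove (fun _ : Fin (n + 1) => ℝ) 0).symm
    have hcons : Measurable fun z : ℝ × (Fin n → ℝ) => (Fin.cons z.1 z.2 : Fin (n + 1) → ℝ) := by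
      refine measurable_pi_iff.2 fun i => Fin.cases ?_ (fun i => ?_) i
      · simpa using measurable_fst
      · simp only [Fin.cons_succ]
        fun_prop
    have hm : ∀ {u : (Fin (n + 1) → ℝ) → ℝ≥0∞}, Measurable u →
        Measurable fun z : ℝ × (Fin n → ℝ) => u (Fin.cons z.1 z.2) := fun hu => hu.comp hcons
    have hfub : ∀ {u : (Fin (n + 1) → ℝ) → ℝ≥0∞}, Measurable u →
        ∫⁻ x, u x = ∫⁻ s : ℝ, ∫⁻ y : Fin n → ℝ, u (Fin.cons s y) := by
      intro u hu
      rw [← mp.lintegral_comp hu, Measure.volume_eq_prod]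
      refine Eq.trans (lintegral_congr fun z => ?_) (lintegral_prod _ (hm hu).aemeasurable)
      exact congrArg u (Fin.insertNth_zero' z.1 z.2)
    rw [hfub hf, hfub hg, hfub hh]
    refine prekopa_leindler_real hp hq hpq (hm hf).lintegral_prod_right'
      (hm hg).lintegral_prod_right' (hm hh).lintegral_prod_right' fun s t => ?_
    refine ih ((hm hf).comp measurable_prodMk_left) ((hm hg).comp measurable_prodMk_left)
      ((hm hh).comp measurable_prodMk_left) fun x y => ?_
    refine (hfg _ _).trans_eq (congrArg h ?_)
    ext i
    refine Fin.cases ?_ (fun i => ?_) i <;> simp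

/-- The Brunn–Minkowski inequality in its multiplicative, dimension-free form. -/
theorem brunn_minkowski_rpow {p q : ℝ} (hp : 0 < p) (hq : 0 < q) (hpq : p + q = 1) {n : ℕ}
    {A B C : Set (EuclideanSpace ℝ (Fin n))} (hA : MeasurableSet A) (hB : MeasurableSet B)
    (hC : MeasurableSet C) (h : ∀ a ∈ A, ∀ b ∈ B, p • a + q • b ∈ C) :
    volume A ^ p * volume B ^ q ≤ volume C := by
  have mp := PiLp.volume_preserving_toLp (Fin n)
  have hvol : ∀ {S : Set (EuclideanSpace ℝ (Fin n))}, MeasurableSet S →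
      volume S = ∫⁻ x : Fin n → ℝ, (WithLp.toLp 2 ⁻¹' S).indicator 1 x := by
    intro S hS
    rw [lintegral_indicator_one (mp.measurable hS), mp.measure_preimage hS.nullMeasurableSet]
  have hmeas : ∀ {S : Set (EuclideanSpace ℝ (Fin n))}, MeasurableSet S →
      Measurable ((WithLp.toLp 2 ⁻¹' S).indicator (1 : (Fin n → ℝ) → ℝ≥0∞)) := fun hS =>
    measurable_one.indicator (mp.measurable hS)
  rw [hvol hA, hvol hB, hvol hC]
  refine prekopa_leindler_pi hp hq hpq n (hmeas hA) (hmeas hB) (hmeas hC) fun x y => ?_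
  by_cases hx : WithLp.toLp 2 x ∈ A
  · by_cases hy : WithLp.toLp 2 y ∈ B
    · have hz : p • x + q • y ∈ WithLp.toLp 2 ⁻¹' C := by simpa using h _ hx _ hy
      rw [Set.indicator_of_mem hz]
      simp [Set.indicator, hx, hy]
    · simp [Set.indicator, hy, hq]
  · simp [Set.indicator, hx, hp]

/-! ### Inner parallel sets -/

theorem isOpen_innerParallel {n : ℕ} (A : Set (EuclideanSpace ℝ (Fin n))) (t : ℝ) :
    IsOpen (innerParallel A t) :=
  isOpen_lt continuous_const Metric.continuous_infEDist

theorem innerParallel_subset {n : ℕ} (A : Set (EuclideanSpace ℝ (Fin n))) (t : ℝ) :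
    innerParallel A t ⊆ A := by
  intro x hx
  by_contra h
  have : Metric.infEDist x Aᶜ = 0 := Metric.infEDist_zero_of_mem h
  exact absurd (lt_of_lt_of_eq hx this) (by simp)

theorem add_mem_of_mem_innerParallel {n : ℕ} {A : Set (EuclideanSpace ℝ (Fin n))} {t : ℝ}
    {x v : EuclideanSpace ℝ (Fin n)} (hx : x ∈ innerParallel A t) (hv : ‖v‖ ≤ t) :
    x + v ∈ A := by
  by_contra h
  have h1 : Metric.infEDist x Aᶜ ≤ edist x (x + v) := Metric.infEDist_le_edist_of_mem h
  have h2 : edist x (x + v) ≤ ENNReal.ofReal t := by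
    rw [edist_dist, dist_self_add_right]
    exact ENNReal.ofReal_le_ofReal hv
  exact absurd (lt_of_lt_of_le hx (h1.trans h2)) (lt_irrefl _)

theorem ball_subset_innerParallel_ball {n : ℕ} (c : EuclideanSpace ℝ (Fin n)) {ρ t : ℝ}
    (ht : 0 < t) : Metric.ball c (ρ - t) ⊆ innerParallel (Metric.ball c ρ) t := by
  intro x hx
  rw [Metric.mem_ball] at hx
  have h1 : ENNReal.ofReal (ρ - dist x c) ≤ Metric.infEDist x (Metric.ball c ρ)ᶜ := by
    refine Metric.le_infEDist.2 fun y hy => ?_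
    rw [edist_dist]
    refine ENNReal.ofReal_le_ofReal ?_
    have hy' : ρ ≤ dist y c := by simpa using hy
    have := dist_triangle_left y c x
    linarith
  exact lt_of_lt_of_le ((ENNReal.ofReal_lt_ofReal_iff_of_nonneg ht.le).2 (by linarith)) h1

/-- Among all sets of a given finite measure, the ball maximizes the measure of
each inner parallel set: if `|B| = |M|` for a ball `B`, then
`|(M)_t| ≤ |(B)_t|` for all `t > 0`. -/
theorem innerParallel_measure_le_ball
    (n : ℕ) (M : Set (EuclideanSpace ℝ (Fin n))) (hM : MeasurableSet M)
    (hMfin : volume M < ⊤)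
    (c : EuclideanSpace ℝ (Fin n)) (ρ : ℝ)
    (hvol : volume (Metric.ball c ρ) = volume M) :
    ∀ t : ℝ, 0 < t →
      volume (innerParallel M t) ≤ volume (innerParallel (Metric.ball c ρ) t) := by
  intro t ht
  rcases eq_or_ne (volume (innerParallel M t)) 0 with hK0 | hK0
  · simp [hK0]
  have hKM : volume (innerParallel M t) ≤ volume M := measure_mono (innerParallel_subset M t)
  have hρ : 0 < ρ := by
    by_contra h
    rw [Metric.ball_eq_empty.2 (not_lt.1 h), measure_empty] at hvol
    exact hK0 (le_antisymm (hKM.trans hvol.ge) (zero_le))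
  rcases Nat.eq_zero_or_pos n with rfl | hn
  · -- The space is a point, the ball is everything and its complement is empty.
    refine measure_mono fun x _ => ?_
    have : (Metric.ball c ρ)ᶜ = ∅ := by
      ext y
      simp [Subsingleton.elim y c, hρ]
    change ENNReal.ofReal t < Metric.infEDist x (Metric.ball c ρ)ᶜ
    simp [this]
  have : Nonempty (Fin n) := ⟨⟨0, hn⟩⟩
  set ω := volume (Metric.ball (0 : EuclideanSpace ℝ (Fin n)) 1) with hω
  have hω0 : ω ≠ 0 := (Metric.measure_ball_pos _ _ one_pos).ne'
  have hωt : ω ≠ ∞ := measure_ball_lt_top.ne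
  have hball : ∀ (x : EuclideanSpace ℝ (Fin n)) {r : ℝ}, 0 ≤ r →
      volume (Metric.ball x r) = ENNReal.ofReal (r ^ n) * ω := by
    intro x r hr
    simpa using Measure.addHaar_ball volume x hr
  have hpre : ∀ (S : Set (EuclideanSpace ℝ (Fin n))) {r : ℝ}, 0 < r →
      volume ((fun x => r • x) ⁻¹' S) = ENNReal.ofReal ((r ^ n)⁻¹) * volume S := by
    intro S r hr
    rw [Measure.addHaar_preimage_smul _ hr.ne', finrank_euclideanSpace_fin,
      abs_of_pos (by positivity)]
  -- `r` is the radius of a ball with the measure of the inner parallel set.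
  obtain ⟨r, hr, hKr⟩ : ∃ r : ℝ, 0 < r ∧
      volume (innerParallel M t) = ENNReal.ofReal (r ^ n) * ω := by
    have hqt : volume (innerParallel M t) / ω ≠ ∞ :=
      ENNReal.div_ne_top (hKM.trans_lt hMfin).ne hω0
    have hq0 : volume (innerParallel M t) / ω ≠ 0 := ENNReal.div_ne_zero.2 ⟨hK0, hωt⟩
    have hpos := ENNReal.toReal_pos hq0 hqt
    refine ⟨(volume (innerParallel M t) / ω).toReal ^ ((n : ℝ)⁻¹), by positivity, ?_⟩
    rw [Real.rpow_inv_natCast_pow hpos.le hn.ne', ENNReal.ofReal_toReal hqt,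
      ENNReal.div_mul_cancel hω0 hωt]
  have hrt : 0 < r + t := by positivity
  have hpq : r / (r + t) + t / (r + t) = 1 := by field_simp
  have hmeas : ∀ s : ℝ, Measurable fun x : EuclideanSpace ℝ (Fin n) => s • x := fun s =>
    measurable_const_smul s
  have hbm := brunn_minkowski_rpow (div_pos hr hrt) (div_pos ht hrt) hpq
    (hmeas r (isOpen_innerParallel M t).measurableSet)
    (Metric.isOpen_ball (x := (0 : EuclideanSpace ℝ (Fin n))) (ε := 1)).measurableSet
    (hmeas (r + t) hM) (by
      intro a ha b hb
      have hb' : ‖b‖ < 1 := by simpa using hb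
      have hv : ‖t • b‖ ≤ t := by
        rw [norm_smul, Real.norm_of_nonneg ht.le]
        nlinarith
      have := add_mem_of_mem_innerParallel ha hv
      have he : (r + t) • ((r / (r + t)) • a + (t / (r + t)) • b) = r • a + t • b := by
        rw [smul_add, smul_smul, smul_smul, mul_div_cancel₀ _ hrt.ne', mul_div_cancel₀ _ hrt.ne']
      simpa only [Set.mem_preimage, he] using this)
  have hn1 : ENNReal.ofReal (r ^ n)⁻¹ * ENNReal.ofReal (r ^ n) = 1 := by
    rw [← ENNReal.ofReal_mul (by positivity), inv_mul_cancel₀ (by positivity), ENNReal.ofReal_one]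
  rw [hpre _ hr, hpre _ hrt, hKr, ← mul_assoc, hn1, one_mul, ← hω,
    ← ENNReal.rpow_add _ _ hω0 hωt, hpq, ENNReal.rpow_one, ← hvol, hball c hρ.le, ← mul_assoc,
    ← ENNReal.ofReal_mul (by positivity)] at hbm
  have hle : r + t ≤ ρ := by
    have h1 : (1 : ℝ≥0∞) ≤ ENNReal.ofReal (((r + t) ^ n)⁻¹ * ρ ^ n) := by
      rwa [← ENNReal.mul_le_mul_iff_left hω0 hωt, one_mul]
    rw [ENNReal.one_le_ofReal, inv_mul_eq_div, one_le_div (by positivity)] at h1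
    exact le_of_pow_le_pow_left₀ hn.ne' hρ.le h1
  calc volume (innerParallel M t) = volume (Metric.ball c r) := by rw [hKr, hball c hr.le]
    _ ≤ volume (Metric.ball c (ρ - t)) := measure_mono (Metric.ball_subset_ball (by linarith))
    _ ≤ _ := measure_mono (ball_subset_innerParallel_ball c ht)
end

section
/- Let n ≥ 1, α ∈ (0,1], and p ∈ [1,∞). There exists a constant C = C(n, α, p) > 0 with the following property: for every continuous function u : ℝ^n → ℝ, every H ≥ 0 with |u(x) − u(y)| ≤ H·|x−y|^α for all x, y ∈ ℝ^n, and every s > 0 such that the superlevel set E_s := {x : |u(x)| > s} has finite measure and E_s ≠ ℝ^n, one has ∫_{E_s} (|u(x)| − s)^p dx ≤ C · H^p · |E_s|^{1 + pα/n}. -/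
/-!
The estimate follows from a uniform pointwise bound on `E = {|u| > s}`. Write `m = |E|` and
choose the radius `ρ = (K m)^(1/n)` with `K = 2 / |B(0,1)|`, so that every ball of radius `ρ` has
measure `2 m`. If `0 < m < ∞`, such a ball cannot be contained in `E`; hence each `x ∈ E` is within
distance `ρ` of a point where `|u| ≤ s`, and the Hölder condition gives `|u x| - s ≤ H ρ^α`
(`excess_le_of_volume_lt_ball`). Raising this to the power `p` and integrating over `E` yields the
claim with `C = K^(pα/n)`.
-/

open MeasureTheory ENNReal

/-- A set of measure less than that of a ball `B(x, ρ)` misses a point of this ball, so the Hölder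
condition bounds the excess of `|u|` over `s` at the centre. -/
lemma excess_le_of_volume_lt_ball {n : ℕ} {α H s ρ : ℝ} (hα : 0 ≤ α) (hH : 0 ≤ H)
    {u : EuclideanSpace ℝ (Fin n) → ℝ}
    (hu : ∀ x y, |u x - u y| ≤ H * dist x y ^ α) (x : EuclideanSpace ℝ (Fin n))
    (hvol : volume {y | s < |u y|} < volume (Metric.ball x ρ)) :
    |u x| - s ≤ H * ρ ^ α := by
  obtain ⟨y, hy, hys⟩ : ∃ y ∈ Metric.ball x ρ, ¬ s < |u y| := by
    by_contra! h
    exact absurd (measure_mono (μ := volume) h) (not_le.2 hvol)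
  have h1 : |u x| - |u y| ≤ |u x - u y| := abs_sub_abs_le_abs_sub _ _
  have h2 : dist x y ^ α ≤ ρ ^ α :=
    Real.rpow_le_rpow dist_nonneg (Metric.mem_ball'.1 hy).le hα
  have h3 := hu x y
  have h4 := mul_le_mul_of_nonneg_left h2 hH
  linarith [not_lt.1 hys]

/-- Estimate of the truncated part: for a continuous `α`-Hölder function `u`
with constant `H` and a level `s > 0` whose superlevel set
`E_s = {|u| > s}` has finite measure and is not all of `ℝⁿ`,
`∫_{E_s} (|u| - s)^p ≤ C(n,α,p) · H^p · |E_s|^{1 + pα/n}`. -/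
theorem truncation_excess_estimate
    (n : ℕ) (hn : 1 ≤ n) (α : ℝ) (hα : α ∈ Set.Ioc (0 : ℝ) 1)
    (p : ℝ) (hp : 1 ≤ p) :
    ∃ C : ℝ, 0 < C ∧ ∀ u : EuclideanSpace ℝ (Fin n) → ℝ, Continuous u →
      ∀ H : ℝ, 0 ≤ H → (∀ x y, |u x - u y| ≤ H * dist x y ^ α) →
      ∀ s : ℝ, 0 < s →
        volume {x | s < |u x|} < ⊤ →
        {x : EuclideanSpace ℝ (Fin n) | s < |u x|} ≠ Set.univ →
        ∫⁻ x in {x | s < |u x|}, ENNReal.ofReal ((|u x| - s) ^ p) ≤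
          ENNReal.ofReal C * ENNReal.ofReal H ^ p *
            (volume {x | s < |u x|}) ^ (1 + p * α / n) := by
  obtain ⟨hα0, -⟩ := hα
  have hn0 : (0 : ℝ) < n := by exact_mod_cast hn
  have hp0 : 0 < p := by linarith
  set ω := volume (Metric.ball (0 : EuclideanSpace ℝ (Fin n)) 1) with hω
  have hω_top : ω ≠ ⊤ := measure_ball_lt_top.ne
  have hω_ne : ω ≠ 0 := (Metric.measure_ball_pos volume _ one_pos).ne'
  have hc : 0 < ω.toReal := ENNReal.toReal_pos hω_ne hω_top
  set K : ℝ := 2 / ω.toReal with hK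
  have hK0 : 0 < K := by positivity
  refine ⟨K ^ (p * α / n), by positivity, ?_⟩
  intro u hcont H hH hu s _ hfin _
  set E : Set (EuclideanSpace ℝ (Fin n)) := {x | s < |u x|} with hE
  have hEmeas : MeasurableSet E := (isOpen_lt continuous_const hcont.abs).measurableSet
  rcases eq_or_ne (volume E) 0 with h0 | h0
  · rw [setLIntegral_measure_zero _ _ h0]
    exact zero_le
  set m : ℝ := (volume E).toReal with hm
  have hm0 : 0 < m := ENNReal.toReal_pos h0 hfin.ne
  have hEm : volume E = ENNReal.ofReal m := (ENNReal.ofReal_toReal hfin.ne).symm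
  set ρ : ℝ := (K * m) ^ (1 / (n : ℝ)) with hρ
  have hρ0 : 0 < ρ := by positivity
  have hρn : ρ ^ n = K * m := by
    rw [hρ, ← Real.rpow_natCast, ← Real.rpow_mul (by positivity), one_div,
      inv_mul_cancel₀ hn0.ne', Real.rpow_one]
  have hball : ∀ x : EuclideanSpace ℝ (Fin n), volume E < volume (Metric.ball x ρ) := by
    intro x
    rw [Measure.addHaar_ball_of_pos _ _ hρ0, finrank_euclideanSpace_fin, hρn, ← hω,
      ← ENNReal.ofReal_toReal hω_top, ← ENNReal.ofReal_mul (by positivity), hEm]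
    have h2 : K * m * ω.toReal = 2 * m := by rw [hK]; field_simp
    rw [h2]
    exact (ENNReal.ofReal_lt_ofReal_iff (by positivity)).2 (by linarith)
  have hpow : (H * ρ ^ α) ^ p = K ^ (p * α / n) * H ^ p * m ^ (p * α / n) := by
    rw [Real.mul_rpow hH (by positivity), hρ, ← Real.rpow_mul (by positivity),
      ← Real.rpow_mul (by positivity), show 1 / (n : ℝ) * (α * p) = p * α / n by ring,
      Real.mul_rpow hK0.le hm0.le]
    ring
  calc ∫⁻ x in E, ENNReal.ofReal ((|u x| - s) ^ p)
      ≤ ∫⁻ _ in E, ENNReal.ofReal ((H * ρ ^ α) ^ p) := by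
        refine setLIntegral_mono' hEmeas fun x hx => ENNReal.ofReal_le_ofReal ?_
        have hx' : s < |u x| := hx
        exact Real.rpow_le_rpow (by linarith)
          (excess_le_of_volume_lt_ball hα0.le hH hu x (hball x)) hp0.le
    _ = ENNReal.ofReal (K ^ (p * α / n)) * ENNReal.ofReal H ^ p *
          volume E ^ (1 + p * α / n) := by
        rw [setLIntegral_const, hpow, ENNReal.rpow_add _ _ h0 hfin.ne, ENNReal.rpow_one, hEm,
          ENNReal.ofReal_mul (by positivity), ENNReal.ofReal_mul (by positivity),
          ENNReal.ofReal_rpow_of_nonneg hH hp0.le, ENNReal.ofReal_rpow_of_pos hm0]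
        ring
end

section
/- Let n ≥ 1, α ∈ (0,1], and q ∈ [1,∞). There exists a constant C = C(n, α, q) > 0 such that for every function u : ℝ^n → ℝ and every H > 0 with |u(x) − u(y)| ≤ H·|x−y|^α for all x, y ∈ ℝ^n, one has the pointwise bound |u(x)| ≤ C · ‖u‖_{q,∞}^{qα/(qα+n)} · H^{n/(n+qα)} for every x ∈ ℝ^n. -/
/-! The Hölder condition forces `|u| > |u x| / 2` on the ball of radius `r = (|u x| / (2 H)) ^ (1 / α)`
around `x`, so testing the weak norm at the level `t = |u x| / 2` bounds it below by
`(|u x| / 2) * (ω r ^ n) ^ (1 / q)`, where `ω` is the volume of the unit ball. Raising this to the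
power `θ = q α / (q α + n)` and solving for `|u x|` gives the claim with `C = 2 ω ^ (-θ / q)`. -/

open MeasureTheory ENNReal

/-- The scaling identity with `b = |u x| / 2`: the lower bound for the weak norm reproduces `2 b`
exactly, since `n θ / (q α) = 1 - θ` for `θ = q α / (q α + n)`. -/
lemma scaling_identity (n : ℕ) {α q b H w : ℝ} (hα : 0 < α) (hq : 0 < q) (hb : 0 < b)
    (hH : 0 < H) (hw : 0 < w) :
    2 * b = (2 * w ^ (-(α / (q * α + n)))) *
      (b * ((((b / H) ^ (1 / α)) ^ n * w) ^ (1 / q))) ^ (q * α / (q * α + n)) *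
        H ^ ((n : ℝ) / (n + q * α)) := by
  have hd : 0 < q * α + n := by positivity
  have hd' : (n : ℝ) + q * α ≠ 0 := by positivity
  -- In logarithmic coordinates the identity is linear.
  obtain ⟨β, rfl⟩ : ∃ β, Real.exp β = b := ⟨_, Real.exp_log hb⟩
  obtain ⟨η, rfl⟩ : ∃ η, Real.exp η = H := ⟨_, Real.exp_log hH⟩
  obtain ⟨ω, rfl⟩ : ∃ ω, Real.exp ω = w := ⟨_, Real.exp_log hw⟩
  simp only [← Real.exp_sub, ← Real.exp_mul, ← Real.exp_add, ← Real.exp_nat_mul, mul_assoc]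
  congr 2
  field_simp
  ring

/-- The superlevel set of `|u|` at half the value `2 b = |u x|` contains a ball around `x`. -/
lemma ball_subset_superlevel {E : Type*} [PseudoMetricSpace E] {u : E → ℝ} {α H b : ℝ}
    (hα : 0 < α) (hH : 0 < H) (hb : 0 < b) (hu : ∀ x y, |u x - u y| ≤ H * dist x y ^ α)
    {x : E} (hx : |u x| = 2 * b) :
    Metric.ball x ((b / H) ^ (1 / α)) ⊆ {y | b < |u y|} := by
  intro y hy
  rw [Metric.mem_ball, dist_comm] at hy
  have h1 : dist x y ^ α < b / H := by
    have h := Real.rpow_lt_rpow dist_nonneg hy hα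
    rwa [← Real.rpow_mul (by positivity), one_div_mul_cancel hα.ne', Real.rpow_one] at h
  have h2 : H * dist x y ^ α < b := by
    rw [lt_div_iff₀ hH] at h1
    linarith
  have h3 := abs_sub_abs_le_abs_sub (u x) (u y)
  have h4 := hu x y
  change b < |u y|
  linarith

/-- Pointwise (`L^∞`) bound by interpolation of the Hölder constant and the weak
Lebesgue norm: `|u(x)| ≤ C · ‖u‖_{q,∞}^{qα/(qα+n)} · H^{n/(n+qα)}`. -/
theorem pointwise_weak_holder_bound
    (n : ℕ) (hn : 1 ≤ n) (α : ℝ) (hα : α ∈ Set.Ioc (0 : ℝ) 1)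
    (q : ℝ) (hq : 1 ≤ q) :
    ∃ C : ℝ, 0 < C ∧ ∀ u : EuclideanSpace ℝ (Fin n) → ℝ,
      ∀ H : ℝ, 0 < H → (∀ x y, |u x - u y| ≤ H * dist x y ^ α) →
      ∀ x : EuclideanSpace ℝ (Fin n),
        ENNReal.ofReal (|u x|) ≤
          ENNReal.ofReal C * (weakLpNorm u q) ^ (q * α / (q * α + n)) *
            ENNReal.ofReal H ^ ((n : ℝ) / (n + q * α)) := by
  have hα0 : 0 < α := hα.1
  have hq0 : 0 < q := by linarith
  set v : ℝ≥0∞ := volume (Metric.ball (0 : EuclideanSpace ℝ (Fin n)) 1) with hv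
  have hvtop : v ≠ ⊤ := measure_ball_lt_top.ne
  have hw : 0 < v.toReal :=
    ENNReal.toReal_pos (Metric.measure_ball_pos volume _ one_pos).ne' hvtop
  refine ⟨2 * v.toReal ^ (-(α / (q * α + n))), by positivity, fun u H hH hu x => ?_⟩
  rcases (abs_nonneg (u x)).eq_or_lt with h0 | h0
  · simp [← h0]
  obtain ⟨b, hx⟩ : ∃ b, |u x| = 2 * b := ⟨|u x| / 2, by ring⟩
  have hb : 0 < b := by linarith
  have hr : 0 < (b / H) ^ (1 / α) := by positivity
  have hW : ENNReal.ofReal (b * ((((b / H) ^ (1 / α)) ^ n * v.toReal) ^ (1 / q)))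
      ≤ weakLpNorm u q := by
    have hvol := measure_mono (μ := volume) (ball_subset_superlevel hα0 hH hb hu hx)
    rw [Measure.addHaar_ball_of_pos _ _ hr, finrank_euclideanSpace_fin, ← hv,
      ← ENNReal.ofReal_toReal hvtop, ← ENNReal.ofReal_mul (by positivity)] at hvol
    rw [ENNReal.ofReal_mul hb.le, ← ENNReal.ofReal_rpow_of_nonneg (by positivity) (by positivity)]
    calc _ ≤ ENNReal.ofReal b * (volume {y | b < |u y|}) ^ (1 / q) := by gcongr
      _ ≤ _ := le_iSup₂_of_le (f := fun (t : ℝ) (_ : 0 < t) =>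
          ENNReal.ofReal t * (volume {y | t < |u y|}) ^ (1 / q)) b hb le_rfl
  rw [hx, scaling_identity n hα0 hq0 hb hH hw, ENNReal.ofReal_mul (by positivity),
    ENNReal.ofReal_mul (by positivity), ← ENNReal.ofReal_rpow_of_pos hH,
    ← ENNReal.ofReal_rpow_of_nonneg (by positivity) (by positivity)]
  gcongr
end
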